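/- arXiv:1512.06244 — 2 statements merged into one kernel-verified Lean document; each statement's English description precedes it below -/
import Mathlib

section
/- If the time-varying graph {G_t} is jointly (δ,T)-connected for some δ, T > 0, then there exist constants δ' > 0 and α₁ > 0 such that every solution x of the consensus dynamics x'(t) = −L(t)x(t) satisfies, for every s ≥ 0, the uniform reconstruction bound ‖x(s) − x_ave(s)·1‖² ≤ (1/α₁) ∫_s^{s+δ'} Σ_{1 ≤ i < j ≤ N} a_ij(t) (x_j(t) − x_i(t))² dt; in particular the centered state x(s) − x_ave(0)·1 is uniformly determined by the signals on the edges of the network. -/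
/-!
Fix a solution `x`, a time `s`, and write `E` for the energy `∫ F` of the edge signals on
`[s, s + T]`, where `F t` is the total power at time `t`. The proof takes `δ' = T` and shows that
the disagreement at time `s` is at most a constant times `c ^ 2` whenever `0 < c` and `E ≤ c ^ 2`;
letting `c ^ 2` decrease to `E` gives the claim. Using `c` in place of `√E` allows division by `c`
even when `E = 0`.

* The speed of each node is `|∑ k, a i k (x k - x i)| ≤ N (c A + F / c)` by the weighted AM–GM
  inequality, so no node moves by more than `M c`, `M = N (A T + 1)`, during `[s, s + T]`
  (`displacement_le`). This replaces an appeal to Cauchy–Schwarz for integrals.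
* If `∫ a i j ≥ δ` on `[s, s + T]`, then `x j - x i` at time `s` differs from its value at time `t`
  by at most `2 M c`; integrating `a i j (x j s - x i s) ^ 2` over the window bounds
  `(x j s - x i s) ^ 2` by a multiple of `c ^ 2` (`edge_sq_le`).
* The graph of such edges is connected, so any two nodes are joined by a path with fewer than `N`
  edges, and all differences `x j s - x i s` are bounded by `N` times the edge bound.
-/

open MeasureTheory Finset Matrix

/-- The time-varying graph Laplacian built from the weight functions `a`. -/
noncomputable def lap {N : ℕ} (a : Fin N → Fin N → ℝ → ℝ) (t : ℝ) :
    Matrix (Fin N) (Fin N) ℝ :=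
  Matrix.of fun i j =>
    if i = j then ∑ k ∈ Finset.univ.erase i, a i k t else -(a i j t)

/-- The time-varying graph is jointly `(δ,T)`-connected. -/
def JointlyConnected {N : ℕ} (a : Fin N → Fin N → ℝ → ℝ) (δ T : ℝ) : Prop :=
  ∀ s : ℝ, 0 ≤ s →
    (SimpleGraph.fromRel fun i j : Fin N => δ ≤ ∫ t in s..s + T, a i j t).Connected

/-- A (locally absolutely continuous) solution of `x'(t) = -L(t) x(t)` on `[t₀,∞)`,
in integral form. -/
def IsSolution {N : ℕ} (a : Fin N → Fin N → ℝ → ℝ) (t₀ : ℝ)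
    (x : ℝ → Fin N → ℝ) : Prop :=
  ContinuousOn x (Set.Ici t₀) ∧
    ∀ t, t₀ ≤ t → x t = x t₀ + ∫ u in t₀..t, (-(lap a u)).mulVec (x u)

/-- The average of the entries of a vector. -/
noncomputable def xave {N : ℕ} (v : Fin N → ℝ) : ℝ := (∑ i, v i) / N

/-- Total power `∑_{i<j} a_ij(t) (x_j(t) - x_i(t))²` of the signals on the edges. -/
noncomputable def edgePower {N : ℕ} (a : Fin N → Fin N → ℝ → ℝ) (x : ℝ → Fin N → ℝ) (t : ℝ) : ℝ :=
  ∑ i, ∑ j ∈ Finset.univ.filter (fun j => i < j), a i j t * (x t j - x t i) ^ 2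

lemma neg_lap_mulVec {N : ℕ} (a : Fin N → Fin N → ℝ → ℝ) (t : ℝ) (v : Fin N → ℝ) (i : Fin N) :
    (-(lap a t)).mulVec v i = ∑ k, a i k t * (v k - v i) := by
  have h : ∀ k ∈ Finset.univ.erase i, (-(lap a t)) i k * v k = a i k t * v k := by
    intro k hk
    have : i ≠ k := (Finset.ne_of_mem_erase hk).symm
    simp [lap, this]
  rw [Matrix.mulVec, dotProduct, ← Finset.add_sum_erase _ _ (Finset.mem_univ i),
    Finset.sum_congr rfl h, ← Finset.add_sum_erase _ (fun k => a i k t * (v k - v i))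
      (Finset.mem_univ i)]
  simp only [mul_sub, Finset.sum_sub_distrib, ← Finset.sum_mul]
  simp [lap]
  ring

lemma edgePower_nonneg {N : ℕ} {a : Fin N → Fin N → ℝ → ℝ} {t : ℝ} (ha : ∀ i j, 0 ≤ a i j t)
    (x : ℝ → Fin N → ℝ) : 0 ≤ edgePower a x t :=
  Finset.sum_nonneg fun i _ => Finset.sum_nonneg fun j _ => mul_nonneg (ha i j) (sq_nonneg _)

lemma le_edgePower {N : ℕ} {a : Fin N → Fin N → ℝ → ℝ} {t : ℝ} (ha : ∀ i j, 0 ≤ a i j t)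
    (hsymm : ∀ i j t, a i j t = a j i t) (x : ℝ → Fin N → ℝ) (i j : Fin N) :
    a i j t * (x t j - x t i) ^ 2 ≤ edgePower a x t := by
  have key : ∀ i j : Fin N, i < j → a i j t * (x t j - x t i) ^ 2 ≤ edgePower a x t := by
    intro i j hij
    refine le_trans ?_ (Finset.single_le_sum (f := fun i => ∑ j ∈ Finset.univ.filter
      (fun j => i < j), a i j t * (x t j - x t i) ^ 2)
      (fun i _ => Finset.sum_nonneg fun j _ => mul_nonneg (ha i j) (sq_nonneg _))
      (Finset.mem_univ i))
    exact Finset.single_le_sum (f := fun j => a i j t * (x t j - x t i) ^ 2)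
      (fun j _ => mul_nonneg (ha i j) (sq_nonneg _)) (by simpa using hij)
  rcases lt_trichotomy i j with h | h | h
  · exact key i j h
  · subst h
    simpa using edgePower_nonneg ha x
  · have := key j i h
    rw [hsymm i j]
    nlinarith

lemma weight_intervalIntegrable {f : ℝ → ℝ} (hf : Measurable f) {A : ℝ}
    (hbd : ∀ᵐ t ∂(volume : Measure ℝ), |f t| ≤ A) (u v : ℝ) :
    IntervalIntegrable f volume u v := by
  refine (intervalIntegrable_const (c := A)).mono_fun' hf.aestronglyMeasurable ?_
  exact ae_restrict_of_ae hbd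

lemma continuousOn_coord {N : ℕ} {x : ℝ → Fin N → ℝ} {t₀ u v : ℝ}
    (hx : ContinuousOn x (Set.Ici t₀)) (hu : t₀ ≤ u) (hv : t₀ ≤ v) (i : Fin N) :
    ContinuousOn (fun t => x t i) (Set.uIcc u v) := by
  refine (continuous_apply i).comp_continuousOn (hx.mono ?_)
  intro t ht
  exact (le_min hu hv).trans ht.1

lemma velocity_intervalIntegrable {N : ℕ} {a : Fin N → Fin N → ℝ → ℝ}
    (hmeas : ∀ i j, Measurable (a i j)) {A : ℝ}
    (hbd : ∀ i j, ∀ᵐ t ∂(volume : Measure ℝ), |a i j t| ≤ A)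
    {x : ℝ → Fin N → ℝ} {t₀ u v : ℝ}
    (hx : ContinuousOn x (Set.Ici t₀)) (hu : t₀ ≤ u) (hv : t₀ ≤ v) (i : Fin N) :
    IntervalIntegrable (fun t => ∑ k, a i k t * (x t k - x t i)) volume u v := by
  have heq : (fun t => ∑ k, a i k t * (x t k - x t i)) =
      ∑ k, fun t => a i k t * (x t k - x t i) := by
    ext t
    simp
  rw [heq]
  exact IntervalIntegrable.sum Finset.univ
    (fun k _ => (weight_intervalIntegrable (hmeas i k) (hbd i k) u v).mul_continuousOn
      ((continuousOn_coord hx hu hv k).sub (continuousOn_coord hx hu hv i)))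

lemma edgePower_intervalIntegrable {N : ℕ} {a : Fin N → Fin N → ℝ → ℝ}
    (hmeas : ∀ i j, Measurable (a i j)) {A : ℝ}
    (hbd : ∀ i j, ∀ᵐ t ∂(volume : Measure ℝ), |a i j t| ≤ A)
    {x : ℝ → Fin N → ℝ} {t₀ u v : ℝ}
    (hx : ContinuousOn x (Set.Ici t₀)) (hu : t₀ ≤ u) (hv : t₀ ≤ v) :
    IntervalIntegrable (edgePower a x) volume u v := by
  have heq : edgePower a x = ∑ i, ∑ j ∈ Finset.univ.filter (fun j => i < j),
      fun t => a i j t * (x t j - x t i) ^ 2 := by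
    ext t
    simp [edgePower]
  rw [heq]
  exact IntervalIntegrable.sum Finset.univ
    (fun i _ => IntervalIntegrable.sum _ fun j _ =>
      (weight_intervalIntegrable (hmeas i j) (hbd i j) u v).mul_continuousOn
        (((continuousOn_coord hx hu hv j).sub (continuousOn_coord hx hu hv i)).pow 2))

lemma IsSolution.coord_sub {N : ℕ} {a : Fin N → Fin N → ℝ → ℝ}
    (hmeas : ∀ i j, Measurable (a i j)) {A : ℝ}
    (hbd : ∀ i j, ∀ᵐ t ∂(volume : Measure ℝ), |a i j t| ≤ A)
    {x : ℝ → Fin N → ℝ} {t₀ : ℝ} (hx : IsSolution a t₀ x) {s t : ℝ} (hs : t₀ ≤ s) (ht : t₀ ≤ t)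
    (i : Fin N) :
    x t i - x s i = ∫ u in s..t, ∑ k, a i k u * (x u k - x u i) := by
  have hvec : ∀ r, t₀ ≤ r →
      IntervalIntegrable (fun u => (-(lap a u)).mulVec (x u)) volume t₀ r := by
    intro r hr
    rw [intervalIntegrable_iff]
    refine Integrable.of_eval fun i => ?_
    simp only [neg_lap_mulVec]
    exact intervalIntegrable_iff.1
      (velocity_intervalIntegrable hmeas hbd hx.1 le_rfl hr i)
  have hint : ∀ r, t₀ ≤ r →
      x r i = x t₀ i + ∫ u in t₀..r, ∑ k, a i k u * (x u k - x u i) := by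
    intro r hr
    have h1 := congrFun (hx.2 r hr) i
    have h2 := (ContinuousLinearMap.proj (R := ℝ) (φ := fun _ : Fin N => ℝ)
      i).intervalIntegral_comp_comm (hvec r hr)
    simp only [ContinuousLinearMap.proj_apply, neg_lap_mulVec] at h2
    rw [h1, Pi.add_apply, h2]
  have := intervalIntegral.integral_interval_sub_left
    (velocity_intervalIntegrable hmeas hbd hx.1 le_rfl ht i)
    (velocity_intervalIntegrable hmeas hbd hx.1 le_rfl hs i)
  rw [← this, hint t ht, hint s hs]
  ring

/-- On a window of length `T` whose signal energy is at most `c ^ 2`, no node moves by more than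
`N (A T + 1) c`. -/
lemma displacement_le {N : ℕ} {a : Fin N → Fin N → ℝ → ℝ}
    (hsymm : ∀ i j t, a i j t = a j i t)
    (hnonneg : ∀ i j (t : ℝ), 0 ≤ t → 0 ≤ a i j t)
    (hmeas : ∀ i j, Measurable (a i j)) {A : ℝ} (hA : 0 < A)
    (hbd : ∀ i j, ∀ᵐ t ∂(volume : Measure ℝ), |a i j t| ≤ A)
    {T : ℝ} {x : ℝ → Fin N → ℝ} {t₀ : ℝ} (ht₀ : 0 ≤ t₀)
    (hx : IsSolution a t₀ x) {s : ℝ} (hs : t₀ ≤ s) {c : ℝ} (hc : 0 < c)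
    (hE : ∫ t in s..s + T, edgePower a x t ≤ c ^ 2)
    {t : ℝ} (hst : s ≤ t) (htT : t ≤ s + T) (i : Fin N) :
    |x t i - x s i| ≤ N * (A * T + 1) * c := by
  have hint : ∀ r, t₀ ≤ r → IntervalIntegrable (edgePower a x) volume s r :=
    fun r hr => edgePower_intervalIntegrable hmeas hbd hx.1 hs hr
  have hts : t₀ ≤ t := hs.trans hst
  rw [hx.coord_sub hmeas hbd hs hts i]
  have hb := intervalIntegral.norm_integral_le_of_norm_le (μ := volume) hst
    (f := fun u => ∑ k, a i k u * (x u k - x u i))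
    (g := fun u => N * (c * A) + N * c⁻¹ * edgePower a x u) ?_
    (intervalIntegrable_const.add ((hint t hts).const_mul _))
  · refine hb.trans ?_
    rw [intervalIntegral.integral_add intervalIntegrable_const ((hint t hts).const_mul _),
      intervalIntegral.integral_const, intervalIntegral.integral_const_mul, smul_eq_mul]
    have hmono : ∫ u in s..t, edgePower a x u ≤ ∫ u in s..s + T, edgePower a x u := by
      refine intervalIntegral.integral_mono_interval le_rfl hst htT ?_
        (hint _ (hts.trans htT))
      filter_upwards [ae_restrict_mem measurableSet_Ioc] with u hu
      exact edgePower_nonneg (fun i j => hnonneg i j u (ht₀.trans (hs.trans hu.1.le))) x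
    have h1 : N * c⁻¹ * ∫ u in s..t, edgePower a x u ≤ N * c⁻¹ * c ^ 2 :=
      mul_le_mul_of_nonneg_left (hmono.trans hE) (by positivity)
    have h2 : (N : ℝ) * c⁻¹ * c ^ 2 = N * c := by field_simp
    have h3 : (t - s) * (N * (c * A)) ≤ T * (N * (c * A)) :=
      mul_le_mul_of_nonneg_right (by linarith) (by positivity)
    nlinarith
  · filter_upwards [ae_all_iff.2 (hbd i)] with u hu hmem
    have hu0 : 0 ≤ u := ht₀.trans (hs.trans hmem.1.le)
    have hterm : ∀ k ∈ Finset.univ, |a i k u * (x u k - x u i)| ≤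
        c * A + c⁻¹ * edgePower a x u := by
      intro k _
      have ha := hnonneg i k u hu0
      have hle := le_edgePower (fun i j => hnonneg i j u hu0) hsymm x i k
      have haA : a i k u ≤ A := (le_abs_self _).trans (hu k)
      rw [abs_mul, abs_of_nonneg ha]
      set d := |x u k - x u i| with hd
      have hd2 : (x u k - x u i) ^ 2 = d ^ 2 := by rw [hd, sq_abs]
      rw [hd2] at hle
      -- weighted AM–GM with weight `c`
      have hamgm : d ≤ c + c⁻¹ * d ^ 2 := by
        have : c + c⁻¹ * d ^ 2 - d = c⁻¹ * ((c - d / 2) ^ 2 + 3 / 4 * d ^ 2) := by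
          field_simp
          ring
        have : 0 ≤ c⁻¹ * ((c - d / 2) ^ 2 + 3 / 4 * d ^ 2) := by positivity
        linarith
      calc a i k u * d ≤ a i k u * (c + c⁻¹ * d ^ 2) := mul_le_mul_of_nonneg_left hamgm ha
        _ = c * a i k u + c⁻¹ * (a i k u * d ^ 2) := by ring
        _ ≤ c * A + c⁻¹ * edgePower a x u := by gcongr
    rw [Real.norm_eq_abs]
    calc |∑ k, a i k u * (x u k - x u i)|
        ≤ ∑ k, |a i k u * (x u k - x u i)| := Finset.abs_sum_le_sum_abs _ _
      _ ≤ ∑ _k : Fin N, (c * A + c⁻¹ * edgePower a x u) := Finset.sum_le_sum hterm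
      _ = N * (c * A) + N * c⁻¹ * edgePower a x u := by
        simp
        ring

/-- Along an edge whose weight has integral at least `δ` over the window, the difference at the
start of the window is controlled by the energy bound `c ^ 2`. -/
lemma edge_sq_le {N : ℕ} {a : Fin N → Fin N → ℝ → ℝ}
    (hsymm : ∀ i j t, a i j t = a j i t)
    (hnonneg : ∀ i j (t : ℝ), 0 ≤ t → 0 ≤ a i j t)
    (hmeas : ∀ i j, Measurable (a i j)) {A : ℝ} (hA : 0 < A)
    (hbd : ∀ i j, ∀ᵐ t ∂(volume : Measure ℝ), |a i j t| ≤ A)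
    {δ T : ℝ} (hδ : 0 < δ) (hT : 0 < T) {x : ℝ → Fin N → ℝ} {t₀ : ℝ} (ht₀ : 0 ≤ t₀)
    (hx : IsSolution a t₀ x) {s : ℝ} (hs : t₀ ≤ s) {c : ℝ} (hc : 0 < c)
    (hE : ∫ t in s..s + T, edgePower a x t ≤ c ^ 2) (i j : Fin N)
    (hij : δ ≤ ∫ t in s..s + T, a i j t) :
    (x s j - x s i) ^ 2 ≤ (2 + 8 * (N * (A * T + 1)) ^ 2 * A * T) / δ * c ^ 2 := by
  set M : ℝ := N * (A * T + 1) with hM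
  have hsT : s ≤ s + T := by linarith
  have hFint := edgePower_intervalIntegrable hmeas hbd hx.1 hs (hs.trans hsT)
  have hmono := intervalIntegral.integral_mono_ae_restrict (μ := volume) hsT
    (f := fun t => a i j t * (x s j - x s i) ^ 2)
    (g := fun t => 2 * edgePower a x t + 8 * (M * c) ^ 2 * A)
    ((weight_intervalIntegrable (hmeas i j) (hbd i j) _ _).mul_const _)
    ((hFint.const_mul 2).add intervalIntegrable_const) ?_
  · rw [intervalIntegral.integral_mul_const,
      intervalIntegral.integral_add (hFint.const_mul 2) intervalIntegrable_const,
      intervalIntegral.integral_const, intervalIntegral.integral_const_mul, smul_eq_mul] at hmono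
    have h1 : δ * (x s j - x s i) ^ 2 ≤ (∫ t in s..s + T, a i j t) * (x s j - x s i) ^ 2 :=
      mul_le_mul_of_nonneg_right hij (sq_nonneg _)
    rw [div_mul_eq_mul_div, le_div_iff₀ hδ]
    nlinarith
  · filter_upwards [ae_restrict_mem measurableSet_Icc, ae_restrict_of_ae (hbd i j)] with t ht hat
    have ht0 : 0 ≤ t := ht₀.trans (hs.trans ht.1)
    have ha := hnonneg i j t ht0
    have haA : a i j t ≤ A := (le_abs_self _).trans hat
    have hle := le_edgePower (fun i j => hnonneg i j t ht0) hsymm x i j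
    have hdi := displacement_le hsymm hnonneg hmeas hA hbd ht₀ hx hs hc hE ht.1 ht.2 i
    have hdj := displacement_le hsymm hnonneg hmeas hA hbd ht₀ hx hs hc hE ht.1 ht.2 j
    rw [← hM] at hdi hdj
    have hdiff : ((x s j - x s i) - (x t j - x t i)) ^ 2 ≤ (2 * (M * c)) ^ 2 := by
      rw [abs_le] at hdi hdj
      apply sq_le_sq'
      · linarith [hdi.1, hdi.2, hdj.1, hdj.2]
      · linarith [hdi.1, hdi.2, hdj.1, hdj.2]
    have hsq : (x s j - x s i) ^ 2 ≤ 2 * (x t j - x t i) ^ 2 + 8 * (M * c) ^ 2 := by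
      nlinarith [sq_nonneg ((x s j - x s i) - 2 * (x t j - x t i))]
    calc a i j t * (x s j - x s i) ^ 2
        ≤ a i j t * (2 * (x t j - x t i) ^ 2 + 8 * (M * c) ^ 2) :=
          mul_le_mul_of_nonneg_left hsq ha
      _ = 2 * (a i j t * (x t j - x t i) ^ 2) + 8 * (M * c) ^ 2 * a i j t := by ring
      _ ≤ 2 * edgePower a x t + 8 * (M * c) ^ 2 * A := by gcongr

lemma walk_abs_sub_le {V : Type*} {G : SimpleGraph V} (f : V → ℝ) {D : ℝ}
    (h : ∀ u v, G.Adj u v → |f v - f u| ≤ D) {u v : V} (p : G.Walk u v) :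
    |f v - f u| ≤ p.length * D := by
  induction p with
  | nil => simp
  | @cons u v w huv p ih =>
    have h1 := h u v huv
    have h2 := abs_sub_le (f w) (f v) (f u)
    rw [SimpleGraph.Walk.length_cons]
    push_cast
    linarith

lemma connected_abs_sub_le {N : ℕ} {G : SimpleGraph (Fin N)} (hG : G.Connected) (f : Fin N → ℝ)
    {D : ℝ} (hD : 0 ≤ D) (h : ∀ u v, G.Adj u v → |f v - f u| ≤ D) (u v : Fin N) :
    |f v - f u| ≤ N * D := by
  obtain ⟨p, hp⟩ := hG.exists_isPath u v
  have hlen : p.length ≤ N := by simpa using hp.length_lt.le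
  refine (walk_abs_sub_le f h p).trans ?_
  gcongr

lemma sum_sq_sub_xave_le {N : ℕ} (hN : 0 < N) (v : Fin N → ℝ) {B : ℝ}
    (h : ∀ i j, |v j - v i| ≤ B) : ∑ i, (v i - xave v) ^ 2 ≤ N * B ^ 2 := by
  have hN' : (0 : ℝ) < N := by exact_mod_cast hN
  have hi : ∀ i ∈ Finset.univ, (v i - xave v) ^ 2 ≤ B ^ 2 := by
    intro i _
    have heq : v i - xave v = (∑ j, (v i - v j)) / N := by
      rw [xave, Finset.sum_sub_distrib]
      simp
      field_simp
    have hsum : |∑ j, (v i - v j)| ≤ N * B := by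
      refine (Finset.abs_sum_le_sum_abs _ _).trans ?_
      refine (Finset.sum_le_sum fun j _ => h j i).trans ?_
      simp
    have habs : |v i - xave v| ≤ B := by
      rw [heq, abs_div, abs_of_pos hN', div_le_iff₀ hN']
      linarith
    exact sq_le_sq' (abs_le.1 habs).1 (abs_le.1 habs).2
  refine (Finset.sum_le_sum hi).trans ?_
  simp

/-- **Theorem 2 (quantitative form).** If the time-varying graph is jointly
`(δ,T)`-connected, then there are `δ' > 0` and `α₁ > 0` such that every solution of
the consensus dynamics satisfies, for every `s` in its domain, the uniform
reconstruction bound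
`‖x(s) - x_ave(s)·1‖² ≤ (1/α₁) ∫_s^{s+δ'} ∑_{i<j} a_ij(t) (x_j(t)-x_i(t))² dt`. -/
theorem state_reconstruction_bound
    {N : ℕ} (hN : 2 ≤ N) (a : Fin N → Fin N → ℝ → ℝ)
    (hsymm : ∀ i j t, a i j t = a j i t)
    (hnonneg : ∀ i j (t : ℝ), 0 ≤ t → 0 ≤ a i j t)
    (hmeas : ∀ i j, Measurable (a i j))
    (A : ℝ) (hA : 0 < A)
    (hbd : ∀ i j, ∀ᵐ t ∂(volume : Measure ℝ), |a i j t| ≤ A)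
    (δ T : ℝ) (hδ : 0 < δ) (hT : 0 < T)
    (hconn : JointlyConnected a δ T) :
    ∃ δ' > (0 : ℝ), ∃ α₁ > (0 : ℝ), ∀ t₀ : ℝ, 0 ≤ t₀ →
      ∀ x : ℝ → Fin N → ℝ, IsSolution a t₀ x → ∀ s : ℝ, t₀ ≤ s →
        (∑ i, (x s i - xave (x s)) ^ 2) ≤
          (1 / α₁) * ∫ t in s..s + δ',
            ∑ i, ∑ j ∈ Finset.univ.filter (fun j => i < j),
              a i j t * (x t j - x t i) ^ 2 := by
  have hNpos : (0 : ℝ) < N := by exact_mod_cast (by omega : 0 < N)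
  set K : ℝ := (2 + 8 * (N * (A * T + 1)) ^ 2 * A * T) / δ with hK
  have hKpos : 0 < K := by positivity
  refine ⟨T, hT, 1 / (N ^ 3 * K), by positivity, ?_⟩
  intro t₀ ht₀ x hx s hs
  change _ ≤ _ * ∫ t in s..s + T, edgePower a x t
  have hE0 : 0 ≤ ∫ t in s..s + T, edgePower a x t := by
    refine intervalIntegral.integral_nonneg (by linarith) fun t ht => ?_
    exact edgePower_nonneg (fun i j => hnonneg i j t (ht₀.trans (hs.trans ht.1))) x
  have key : ∀ e, ∫ t in s..s + T, edgePower a x t < e →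
      (∑ i, (x s i - xave (x s)) ^ 2) / (N ^ 3 * K) ≤ e := by
    intro e he
    have he0 : 0 < e := hE0.trans_lt he
    have hc : 0 < √e := Real.sqrt_pos.2 he0
    have hce : √e ^ 2 = e := Real.sq_sqrt he0.le
    have hpair := connected_abs_sub_le (hconn s (ht₀.trans hs)) (x s)
      (Real.sqrt_nonneg (K * e)) (by
        intro i j hadj
        rw [SimpleGraph.fromRel_adj] at hadj
        apply Real.abs_le_sqrt
        have hij : δ ≤ ∫ t in s..s + T, a i j t := by
          rcases hadj.2 with h | h
          · exact h
          · simpa only [hsymm j i] using h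
        have := edge_sq_le hsymm hnonneg hmeas hA hbd hδ hT ht₀ hx hs hc
          (by rw [hce]; exact he.le) i j hij
        rwa [hce] at this)
    have hfin := sum_sq_sub_xave_le (by omega) (x s) hpair
    rw [mul_pow, Real.sq_sqrt (by positivity)] at hfin
    rw [div_le_iff₀ (by positivity)]
    linarith
  have := le_of_forall_gt_imp_ge_of_dense key
  rw [div_le_iff₀ (by positivity)] at this
  rw [one_div_one_div]
  linarith
end

section
/- Suppose the weight functions a_ij(t) = a_ji(t) ≥ 0 are Lebesgue measurable, bounded almost everywhere by A* > 0, and there exist constants α₁ > 0 and T > 0 such that ∫_s^{s+T} (L(t) + (1/N)·1·1ᵀ) dt ≥ α₁ I (in the positive semidefinite order) for all s ≥ 0. Then there exists δ > 0 such that the time-varying graph {G_t} is jointly (δ,T)-connected, i.e., for every s ≥ 0 the edges {i,j} with ∫_s^{s+T} a_ij(t) dt ≥ δ form a connected graph on {1,…,N}. -/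
/-!
Fix a window `[s, s + T]`, let `w i j` be the integral of `a i j` over it, and take `δ = α₁ / (2N)`.
If the graph of edges with `w i j ≥ δ` were disconnected, let `C` be the component of a vertex, and
let `x` be the vector equal to `#Cᶜ` on `C` and to `-#C` off `C`. Its entries sum to zero, so the
`1·1ᵀ` term does not contribute, and the quadratic form at `x` is `∑ᵢⱼ w i j * (x i * (x i - x j))`
(`quadForm_eq`). Each summand is at most `δ * (x i * (x i - x j))`: both vanish when `i` and `j` lie
on the same side of the cut, while across the cut `w i j < δ` and `x i * (x i - x j) > 0`. Hence the
form is at most `δ N ‖x‖² = (α₁ / 2) ‖x‖²`, contradicting the lower bound `α₁ ‖x‖²`.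
-/

open MeasureTheory Finset Matrix

/-- The all-ones `N × N` matrix `1·1ᵀ`. -/
def onesM (N : ℕ) : Matrix (Fin N) (Fin N) ℝ := Matrix.of fun _ _ => (1 : ℝ)

/-- The integrated matrix `∫ (L + (1/N)·1·1ᵀ)` is the Laplacian of the integrated weights plus a
constant matrix. -/
lemma integral_lap_apply {N : ℕ} (a : Fin N → Fin N → ℝ → ℝ) (s T : ℝ)
    (hInt : ∀ i j, IntervalIntegrable (a i j) volume s (s + T)) (i j : Fin N) :
    ∫ t in s..s + T, (lap a t + (N : ℝ)⁻¹ • onesM N) i j =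
      (if i = j then ∑ k ∈ Finset.univ.erase i, ∫ t in s..s + T, a i k t
        else -∫ t in s..s + T, a i j t) + T * (N : ℝ)⁻¹ := by
  by_cases h : i = j
  · subst h
    simp only [lap, onesM, Matrix.add_apply, Matrix.smul_apply, Matrix.of_apply, if_true,
      smul_eq_mul, mul_one]
    rw [intervalIntegral.integral_add
      (by simpa only [Finset.sum_fn] using
        IntervalIntegrable.sum (Finset.univ.erase i) fun k _ => hInt i k)
      intervalIntegrable_const,
      intervalIntegral.integral_finsetSum fun k _ => hInt i k]
    simp
  · simp only [lap, onesM, Matrix.add_apply, Matrix.smul_apply, Matrix.of_apply, if_neg h,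
      smul_eq_mul, mul_one]
    rw [intervalIntegral.integral_add (f := fun t => -a i j t) (hInt i j).neg
      intervalIntegrable_const]
    simp

/-- On vectors with zero sum a constant matrix contributes nothing, which leaves the Laplacian
form; the diagonal terms `i = j` of the right-hand side vanish. -/
lemma quadForm_eq {N : ℕ} (w : Fin N → Fin N → ℝ) (c : ℝ) (x : Fin N → ℝ) (hx : ∑ i, x i = 0) :
    ∑ i, x i * ∑ j, ((if i = j then ∑ k ∈ Finset.univ.erase i, w i k else -w i j) + c) * x j =
      ∑ i, ∑ j, w i j * (x i * (x i - x j)) := by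
  refine Finset.sum_congr rfl fun i _ => ?_
  simp only [add_mul, Finset.sum_add_distrib, ← Finset.mul_sum, hx, mul_zero, add_zero]
  rw [← Finset.add_sum_erase _ _ (Finset.mem_univ i),
    ← Finset.add_sum_erase (f := fun j => w i j * (x i * (x i - x j))) _ (Finset.mem_univ i)]
  have h : ∑ j ∈ Finset.univ.erase i,
      (if i = j then ∑ k ∈ Finset.univ.erase i, w i k else -w i j) * x j =
      ∑ j ∈ Finset.univ.erase i, -w i j * x j :=
    Finset.sum_congr rfl fun j hj => by rw [if_neg (Finset.ne_of_mem_erase hj).symm]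
  rw [h]
  simp only [if_true, sub_self, mul_zero, zero_add]
  rw [Finset.sum_mul, ← Finset.sum_add_distrib, Finset.mul_sum]
  exact Finset.sum_congr rfl fun j _ => by ring

/-- A vector summing to zero, positive constant on `p` and negative constant off `p`. -/
lemma exists_cut_vector {N : ℕ} (p : Fin N → Prop) {u v : Fin N} (hu : p u) (hv : ¬p v) :
    ∃ x : Fin N → ℝ, ∃ m k : ℝ, 0 < m ∧ 0 < k ∧ (∀ i, p i → x i = m) ∧ (∀ i, ¬p i → x i = -k) ∧
      ∑ i, x i = 0 := by
  classical
  refine ⟨fun i => if p i then ((Finset.univ.filter fun i => ¬p i).card : ℝ)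
    else -((Finset.univ.filter p).card : ℝ), _, _, ?_, ?_, fun i hi => if_pos hi,
    fun i hi => if_neg hi, ?_⟩
  · exact_mod_cast Finset.card_pos.2 ⟨v, by simpa using hv⟩
  · exact_mod_cast Finset.card_pos.2 ⟨u, by simpa using hu⟩
  · rw [Finset.sum_ite]
    simp only [Finset.sum_const, nsmul_eq_mul]
    ring

/-- **From the observability lower bound to connectivity.** If
`∫_s^{s+T} (L(t) + (1/N)·1·1ᵀ) dt ≥ α₁ I` (Loewner order) for all `s ≥ 0`, then
there exists `δ > 0` such that the time-varying graph is jointly `(δ,T)`-connected. -/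
theorem integral_laplacian_lower_bound_implies_jointly_connected
    {N : ℕ} (hN : 2 ≤ N) (a : Fin N → Fin N → ℝ → ℝ)
    (hsymm : ∀ i j t, a i j t = a j i t)
    (hnonneg : ∀ i j (t : ℝ), 0 ≤ t → 0 ≤ a i j t)
    (hmeas : ∀ i j, Measurable (a i j))
    (A : ℝ) (hA : 0 < A)
    (hbd : ∀ i j, ∀ᵐ t ∂(volume : Measure ℝ), |a i j t| ≤ A)
    (α₁ T : ℝ) (hα₁ : 0 < α₁) (hT : 0 < T)
    (hlb : ∀ s : ℝ, 0 ≤ s →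
      ((Matrix.of fun i j =>
          ∫ t in s..s + T, (lap a t + (N : ℝ)⁻¹ • onesM N) i j) -
        α₁ • (1 : Matrix (Fin N) (Fin N) ℝ)).PosSemidef) :
    ∃ δ > (0 : ℝ), JointlyConnected a δ T := by
  have hN0 : (0 : ℝ) < N := by exact_mod_cast (by omega : 0 < N)
  refine ⟨α₁ / (2 * N), by positivity, fun s hs => ?_⟩
  have hInt : ∀ i j, IntervalIntegrable (a i j) volume s (s + T) := fun i j =>
    (intervalIntegrable_const (c := A)).mono_fun' (hmeas i j).aestronglyMeasurable
      (ae_restrict_of_ae (hbd i j))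
  set δ := α₁ / (2 * N) with hδ
  set w : Fin N → Fin N → ℝ := fun i j => ∫ t in s..s + T, a i j t with hw
  set G := SimpleGraph.fromRel fun i j : Fin N => δ ≤ w i j with hG
  have : Nonempty (Fin N) := ⟨⟨0, by omega⟩⟩
  refine SimpleGraph.Connected.mk fun u v => ?_
  by_contra huv
  obtain ⟨x, m, k, hm, hk, hxp, hxn, hx0⟩ :=
    exists_cut_vector (G.Reachable u) (SimpleGraph.Reachable.refl u) huv
  have hcut : ∀ i j, G.Reachable u i → ¬G.Reachable u j → w i j < δ ∧ w j i < δ := by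
    intro i j hi hj
    have hne : i ≠ j := by rintro rfl; exact hj hi
    have hadj : ¬G.Adj i j := fun h => hj (hi.trans h.reachable)
    rw [hG, SimpleGraph.fromRel_adj] at hadj
    push Not at hadj
    exact hadj hne
  have hterm : ∀ i j, w i j * (x i * (x i - x j)) ≤ δ * (x i * (x i - x j)) := by
    intro i j
    by_cases hi : G.Reachable u i <;> by_cases hj : G.Reachable u j
    · simp [hxp i hi, hxp j hj]
    · rw [hxp i hi, hxn j hj]
      exact mul_le_mul_of_nonneg_right (hcut i j hi hj).1.le (by nlinarith)
    · rw [hxn i hi, hxp j hj]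
      exact mul_le_mul_of_nonneg_right (hcut j i hj hi).2.le (by nlinarith)
    · simp [hxn i hi, hxn j hj]
  have hsum : ∑ i, ∑ j, δ * (x i * (x i - x j)) = δ * N * ∑ i, x i * x i := by
    rw [Finset.mul_sum]
    refine Finset.sum_congr rfl fun i _ => ?_
    simp only [← Finset.mul_sum, Finset.sum_sub_distrib, hx0]
    simp
    ring
  have hpos : 0 < ∑ i, x i * x i :=
    Finset.sum_pos' (fun i _ => mul_self_nonneg _)
      ⟨u, Finset.mem_univ u, by rw [hxp u (SimpleGraph.Reachable.refl u)]; positivity⟩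
  have hq := (hlb s hs).dotProduct_mulVec_nonneg x
  rw [Matrix.sub_mulVec, dotProduct_sub, Matrix.smul_mulVec, Matrix.one_mulVec,
    dotProduct_smul] at hq
  simp only [dotProduct, Matrix.mulVec, Matrix.of_apply, integral_lap_apply a s T hInt,
    star_trivial, smul_eq_mul] at hq
  have hle : ∑ i, ∑ j, w i j * (x i * (x i - x j)) ≤ δ * N * ∑ i, x i * x i :=
    hsum ▸ Finset.sum_le_sum fun i _ => Finset.sum_le_sum fun j _ => hterm i j
  rw [quadForm_eq w _ x hx0] at hq
  have hδN : δ * N = α₁ / 2 := by rw [hδ]; field_simp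
  rw [hδN] at hle
  nlinarith [mul_pos hα₁ hpos]
end
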